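/- Let i ≤ k be positive integers, A : 𝓢(ℝ^i) → 𝓢'(ℝ^i) continuous linear, ℓ : {1,…,i} → {1,…,k} injective, and let A_{(ℓ)} : 𝓢(ℝ^k) → 𝓢'(ℝ^k) be the unique continuous linear map satisfying the pure-tensor characterization A_{(ℓ)}(f₁⊗⋯⊗f_k)(g₁⊗⋯⊗g_k) = A(f_{ℓ(1)}⊗⋯⊗f_{ℓ(i)})(g_{ℓ(1)}⊗⋯⊗g_{ℓ(i)}) · ∏_{m ∉ range(ℓ)} ∫ f_m g_m. Then for every permutation π ∈ S_k (acting on Schwartz functions by (π·f)(x₁,…,x_k) = f(x_{π(1)},…,x_{π(k)}) and on tempered distributions by (π·u)(g) = u(π⁻¹·g)), the conjugated operator π ∘ A_{(ℓ)} ∘ π⁻¹ equals A_{(π∘ℓ)}, the unique extension associated with the injection π ∘ ℓ. -/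

import Mathlib

/-!
Both sides of the claim are separately continuous bilinear in `(f, g)`, so it suffices to check it
on pure tensors, provided these span a dense subspace of `𝓢(ℝ^k)`. On tensors it is a reindexing
(`extension_conj_tensor`): `π⁻¹` sends `f₁ ⊗ ⋯ ⊗ f_k` to `f_{π(1)} ⊗ ⋯ ⊗ f_{π(k)}`, and
`π` maps the complement of the range of `ℓ` onto the complement of the range of `π ∘ ℓ`.

The analytic content is density, in the form: a continuous functional on `𝓢(ℝ^k)` vanishing on all
tensors of compactly supported functions is zero (`vanish_of_vanish_on_tensors`). Compactly
supported functions are dense (`schwartz_compact_dense`), and by dilation the support may be taken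
in `[-1/4, 1/4]^k`. Such an `f` is a continuous function on the torus `(ℝ/ℤ)^k`, whose Fourier
coefficients `c n` are values of the Fourier transform of `f` and hence decay rapidly. If `χ` is a
product cutoff equal to `1` on `[-1/4, 1/4]^k` and vanishing outside `[-1/2, 1/2]^k`, then
`f(x) = ∑ n, c n • χ(x) e^{2πi n·x}`. Each term is a multiple of a pure tensor, its seminorms are
`c n` times a polynomial in `n`, so the series converges in `𝓢(ℝ^k)` (`schwartz_hasSum`) and the
functional vanishes on `f`.
-/

open MeasureTheory SchwartzMap

/-- Distribution-valued operators on `ℝ^n`: continuous linear maps `𝓢(ℝ^n) → 𝓢'(ℝ^n)`. -/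
abbrev DVO (n : ℕ) : Type :=
  SchwartzMap (Fin n → ℝ) ℂ →L[ℂ] (SchwartzMap (Fin n → ℝ) ℂ →L[ℂ] ℂ)

/-- The continuous linear equivalence on `ℝ^k` permuting coordinates: `x ↦ x ∘ π`. -/
noncomputable def permCLE (k : ℕ) (π : Equiv.Perm (Fin k)) : (Fin k → ℝ) ≃L[ℝ] (Fin k → ℝ) :=
  (LinearEquiv.funCongrLeft ℝ ℝ π).toContinuousLinearEquiv

/-- The action of a permutation `π` on Schwartz functions on `ℝ^k`:
`(π · f)(x₁,…,x_k) = f(x_{π(1)},…,x_{π(k)})`, i.e. `f ↦ (x ↦ f (x ∘ π))`. -/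
noncomputable def permCLM (k : ℕ) (π : Equiv.Perm (Fin k)) :
    SchwartzMap (Fin k → ℝ) ℂ →L[ℂ] SchwartzMap (Fin k → ℝ) ℂ :=
  SchwartzMap.compCLMOfContinuousLinearEquiv ℂ (permCLE k π)

/-- `F ∈ 𝓢(ℝ^n)` is the pure tensor `f₁ ⊗ ⋯ ⊗ f_n` of the one-dimensional Schwartz functions
`f₁, …, f_n`. -/
def IsTensor {n : ℕ} (f : Fin n → SchwartzMap ℝ ℂ) (F : SchwartzMap (Fin n → ℝ) ℂ) : Prop :=
  ∀ x : Fin n → ℝ, F x = ∏ m, f m (x m)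

/-- `E` is the `k`-particle extension `A_{(ℓ(1),…,ℓ(i))}` of the `i`-particle operator `A`. -/
def IsExtension (i k : ℕ) (A : DVO i) (ℓ : Fin i → Fin k) (E : DVO k) : Prop :=
  ∀ (f g : Fin k → SchwartzMap ℝ ℂ)
    (F G : SchwartzMap (Fin k → ℝ) ℂ) (F' G' : SchwartzMap (Fin i → ℝ) ℂ),
    IsTensor f F → IsTensor g G →
    IsTensor (fun a => f (ℓ a)) F' → IsTensor (fun a => g (ℓ a)) G' →
    E F G = A F' G' * ∏ m ∈ Finset.univ \ Finset.image ℓ Finset.univ, ∫ x : ℝ, f m x * g m x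

open Filter Topology
open scoped ContDiff

/-! ### Series, products and truncation in the Schwartz space -/

/-- A pointwise convergent series of Schwartz functions converges in the Schwartz topology as soon
as every Schwartz seminorm is summable along it. -/
theorem schwartz_hasSum {E ι : Type*} [NormedAddCommGroup E] [NormedSpace ℝ E]
    (u : ι → SchwartzMap E ℂ) (f : SchwartzMap E ℂ)
    (hp : ∀ x, HasSum (fun n => u n x) (f x))
    (hs : ∀ a b : ℕ, Summable fun n => SchwartzMap.seminorm ℂ a b (u n)) :
    HasSum u f := by
  rw [HasSum, (schwartz_withSeminorms ℂ E ℂ).tendsto_nhds]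
  rintro ⟨a, b⟩ ε hε
  simp only [SummationFilter.unconditional_filter]
  filter_upwards [(tendsto_tsum_compl_atTop_zero
    (fun n => SchwartzMap.seminorm ℂ a b (u n))).eventually (gt_mem_nhds hε)] with s hsε
  refine lt_of_le_of_lt ?_ hsε
  rw [SchwartzMap.schwartzSeminormFamily_apply, map_sub_rev]
  have hsub : ∀ (a b : ℕ), Summable fun n : {n // n ∉ s} => SchwartzMap.seminorm ℂ a b (u n) :=
    fun a b => (hs a b).subtype _
  -- the remainder is the sum of the terms outside `s`
  have htail : (f - ∑ n ∈ s, u n : SchwartzMap E ℂ) =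
      fun x => ∑' n : {n // n ∉ s}, u n x := by
    funext x
    have h := (hp x).summable.sum_add_tsum_subtype_compl s
    rw [(hp x).tsum_eq] at h
    simp only [sub_apply, sum_apply]
    rw [← h]; ring
  refine SchwartzMap.seminorm_le_bound ℂ a b _ (tsum_nonneg fun _ => apply_nonneg _ _) fun x => ?_
  rw [htail, iteratedFDeriv_tsum_apply (N := b) (f := fun (n : {n // n ∉ s}) => u n)
    (v := fun j (n : {n // n ∉ s}) => SchwartzMap.seminorm ℂ 0 j (u n))
    (fun n => (u n).smooth _) (fun j _ => hsub 0 j)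
    (fun j n y _ => SchwartzMap.norm_iteratedFDeriv_le_seminorm ℂ (u n) j y) le_rfl]
  have hn : Summable fun n : {n // n ∉ s} => ‖iteratedFDeriv ℝ b (u n) x‖ :=
    Summable.of_nonneg_of_le (fun _ => norm_nonneg _)
      (fun n => SchwartzMap.norm_iteratedFDeriv_le_seminorm ℂ (u n) b x) (hsub 0 b)
  calc ‖x‖ ^ a * ‖∑' n : {n // n ∉ s}, iteratedFDeriv ℝ b (u n) x‖
      ≤ ‖x‖ ^ a * ∑' n : {n // n ∉ s}, ‖iteratedFDeriv ℝ b (u n) x‖ := by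
        gcongr; exact norm_tsum_le_tsum_norm hn
    _ = ∑' n : {n // n ∉ s}, ‖x‖ ^ a * ‖iteratedFDeriv ℝ b (u n) x‖ := tsum_mul_left.symm
    _ ≤ _ := (hn.mul_left _).tsum_le_tsum
        (fun n => SchwartzMap.le_seminorm ℂ a b (u n) x) (hsub a b)

/-- Leibniz bound for the product of a Schwartz function and a function `h` whose derivatives of
order `j` are bounded by `B j`; the bound depends on `h` through `B` only. -/
theorem schwartz_mul_bound {E : Type*} [NormedAddCommGroup E] [NormedSpace ℝ E]
    {h : E → ℂ} (hh : ContDiff ℝ ∞ h) {B : ℕ → ℝ}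
    (hB : ∀ j x, ‖iteratedFDeriv ℝ j h x‖ ≤ B j) (f : SchwartzMap E ℂ) (a b : ℕ) (x : E) :
    ‖x‖ ^ a * ‖iteratedFDeriv ℝ b (fun y => h y * f y) x‖ ≤
      ∑ j ∈ Finset.range (b + 1), (b.choose j : ℝ) * B j * SchwartzMap.seminorm ℂ a (b - j) f := by
  calc _ ≤ ‖x‖ ^ a * ∑ j ∈ Finset.range (b + 1), (b.choose j : ℝ) * ‖iteratedFDeriv ℝ j h x‖ *
        ‖iteratedFDeriv ℝ (b - j) f x‖ := by
        gcongr
        exact norm_iteratedFDeriv_mul_le hh (f.smooth ⊤) x (by exact_mod_cast le_top)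
    _ = ∑ j ∈ Finset.range (b + 1), (b.choose j : ℝ) * ‖iteratedFDeriv ℝ j h x‖ *
        (‖x‖ ^ a * ‖iteratedFDeriv ℝ (b - j) f x‖) := by
        rw [Finset.mul_sum]; exact Finset.sum_congr rfl fun _ _ => by ring
    _ ≤ _ := by
        have hB0 : ∀ j, 0 ≤ B j := fun j => (norm_nonneg _).trans (hB j x)
        gcongr with j _
        · exact mul_nonneg (Nat.cast_nonneg _) (hB0 j)
        · exact hB j x
        · exact SchwartzMap.le_seminorm ℂ a (b - j) f x

theorem norm_iteratedFDeriv_comp_clm_le {E G : Type*} [NormedAddCommGroup E] [NormedSpace ℝ E]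
    [NormedAddCommGroup G] [NormedSpace ℝ G] {h : E → ℂ} (hh : ContDiff ℝ ∞ h) (L : G →L[ℝ] E)
    (j : ℕ) (x : G) :
    ‖iteratedFDeriv ℝ j (h ∘ L) x‖ ≤ ‖iteratedFDeriv ℝ j h (L x)‖ * ‖L‖ ^ j := by
  rw [L.iteratedFDeriv_comp_right hh x (by exact_mod_cast le_top)]
  simpa using ContinuousMultilinearMap.norm_compContinuousLinearMap_le
    (iteratedFDeriv ℝ j h (L x)) (fun _ => L)

/-- Density of compactly supported functions in the Schwartz space, in dual form: the truncations
`x ↦ u(x / (R + 1)) f(x)` by a bump function `u` converge to `f`. -/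
theorem schwartz_compact_dense {E : Type*} [NormedAddCommGroup E] [NormedSpace ℝ E]
    [FiniteDimensional ℝ E] (T : SchwartzMap E ℂ →L[ℂ] ℂ)
    (hT : ∀ f : SchwartzMap E ℂ, HasCompactSupport f → T f = 0) (f : SchwartzMap E ℂ) :
    T f = 0 := by
  let u : ContDiffBump (0 : E) := ⟨1, 2, one_pos, one_lt_two⟩
  have huc : HasCompactSupport fun x => (u x : ℂ) :=
    u.hasCompactSupport.comp_left (g := fun t : ℝ => (t : ℂ)) Complex.ofReal_zero
  have hud : ContDiff ℝ ∞ fun x => (u x : ℂ) := Complex.ofRealCLM.contDiff.comp u.contDiff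
  let U : SchwartzMap E ℂ := huc.toSchwartzMap hud
  let c : ℕ → E →L[ℝ] E := fun R => ((R : ℝ) + 1)⁻¹ • ContinuousLinearMap.id ℝ E
  have hc : ∀ R x, c R x = ((R : ℝ) + 1)⁻¹ • x := fun R x => rfl
  have hR : ∀ R : ℕ, (0 : ℝ) < (R : ℝ) + 1 := fun R => by positivity
  have hcn : ∀ R, ‖c R‖ ≤ 1 := fun R => by
    refine ContinuousLinearMap.opNorm_le_bound _ zero_le_one fun x => ?_
    rw [hc, norm_smul, norm_inv, Real.norm_of_nonneg (hR R).le]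
    gcongr
    exact inv_le_one_of_one_le₀ (by simp)
  have hcd : ∀ R, ContDiff ℝ ∞ ((fun x => (u x : ℂ)) ∘ c R) := fun R => hud.comp (c R).contDiff
  have hB : ∀ R j x, ‖iteratedFDeriv ℝ j ((fun x => (u x : ℂ)) ∘ c R) x‖ ≤
      SchwartzMap.seminorm ℂ 0 j U := fun R j x => by
    refine (norm_iteratedFDeriv_comp_clm_le hud (c R) j x).trans ?_
    refine (mul_le_of_le_one_right (norm_nonneg _) (pow_le_one₀ (norm_nonneg _) (hcn R))).trans ?_
    exact SchwartzMap.norm_iteratedFDeriv_le_seminorm ℂ U j _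
  have hcs : ∀ R, HasCompactSupport (fun x => (u (c R x) : ℂ) * f x) := fun R => by
    refine HasCompactSupport.mul_right ?_
    exact huc.comp_homeomorph (Homeomorph.smulOfNeZero ((R : ℝ) + 1)⁻¹ (inv_ne_zero (hR R).ne'))
  let v : ℕ → SchwartzMap E ℂ := fun R => (hcs R).toSchwartzMap ((hcd R).mul (f.smooth ⊤))
  have hv : Tendsto v atTop (𝓝 f) := by
    rw [(schwartz_withSeminorms ℂ E ℂ).tendsto_nhds]
    rintro ⟨a, b⟩ ε hε
    -- with one more power of `‖x‖`, the truncation errors are bounded by `M` uniformly in `R`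
    set M : ℝ := (∑ j ∈ Finset.range (b + 1), (b.choose j : ℝ) * SchwartzMap.seminorm ℂ 0 j U *
      SchwartzMap.seminorm ℂ (a + 1) (b - j) f) + SchwartzMap.seminorm ℂ (a + 1) b f with hM
    have hM0 : 0 ≤ M := by positivity
    have key : ∀ R, SchwartzMap.seminorm ℂ a b (v R - f) ≤ M * ((R : ℝ) + 1)⁻¹ := fun R => by
      refine SchwartzMap.seminorm_le_bound ℂ a b _ (mul_nonneg hM0 (inv_nonneg.2 (hR R).le))
        fun x => ?_
      rcases lt_or_ge ‖x‖ ((R : ℝ) + 1) with hx | hx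
      · -- the cutoff is `1` near `x`
        have : ((v R - f : SchwartzMap E ℂ) : E → ℂ) =ᶠ[𝓝 x] fun _ => 0 := by
          filter_upwards [continuous_norm.continuousAt.eventually (gt_mem_nhds hx)] with y hy
          have h1 : u (c R y) = 1 := by
            apply u.one_of_mem_closedBall
            rw [mem_closedBall_zero_iff, hc, norm_smul, norm_inv, Real.norm_of_nonneg (hR R).le]
            exact (inv_mul_le_iff₀ (hR R)).2 (by simpa [u] using hy.le)
          simp [v, h1]
        rw [(this.iteratedFDeriv ℝ b).eq_of_nhds]
        simp only [iteratedFDeriv_fun_zero, Pi.zero_apply, norm_zero, mul_zero]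
        exact mul_nonneg hM0 (inv_nonneg.2 (hR R).le)
      · rw [← div_eq_mul_inv, le_div_iff₀ (hR R)]
        have h1 : ‖x‖ ^ (a + 1) * ‖iteratedFDeriv ℝ b (v R - f : SchwartzMap E ℂ) x‖ ≤ M := by
          refine (SchwartzMap.le_seminorm ℂ (a + 1) b (v R - f) x).trans ?_
          refine (map_sub_le_add _ _ _).trans ?_
          rw [hM]
          gcongr
          refine SchwartzMap.seminorm_le_bound ℂ _ _ _ (by positivity) fun y => ?_
          exact schwartz_mul_bound (hcd R) (hB R) f (a + 1) b y
        refine le_trans ?_ h1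
        rw [pow_succ, mul_right_comm]
        gcongr
    have hlim : Tendsto (fun R : ℕ => M * ((R : ℝ) + 1)⁻¹) atTop (𝓝 0) := by
      simpa [one_div] using (tendsto_one_div_add_atTop_nhds_zero_nat (𝕜 := ℝ)).const_mul M
    filter_upwards [hlim.eventually (gt_mem_nhds hε)] with R hRε
    exact (key R).trans_lt hRε
  have h0 : ∀ R, T (v R) = 0 := fun R => hT _ (hcs R)
  have := (T.continuous.tendsto f).comp hv
  exact tendsto_nhds_unique this (by simp [Function.comp_def, h0])

/-! ### Characters of integer frequency -/

theorem norm_iteratedFDeriv_fourierChar (j : ℕ) (t : ℝ) :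
    ‖iteratedFDeriv ℝ j (fun s : ℝ => (Real.fourierChar s : ℂ)) t‖ = (2 * Real.pi) ^ j := by
  have h : ∀ j : ℕ, iteratedDeriv j (fun s : ℝ => (Real.fourierChar s : ℂ)) =
      fun s => (2 * Real.pi * Complex.I) ^ j * (Real.fourierChar s : ℂ) := by
    intro j
    induction j with
    | zero => simp
    | succ j ih =>
      rw [iteratedDeriv_succ, ih]
      funext s
      rw [((Real.hasDerivAt_fourierChar s).const_mul _).deriv]
      ring
  rw [norm_iteratedFDeriv_eq_norm_iteratedDeriv, h]
  have h1 : ‖(Real.fourierChar t : ℂ)‖ = 1 := Circle.norm_coe _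
  simp [abs_of_pos Real.pi_pos, h1]

theorem contDiff_fourierChar' : ContDiff ℝ ∞ (fun s : ℝ => (Real.fourierChar s : ℂ)) := by
  simp only [Real.fourierChar_apply]
  have h : ContDiff ℝ ∞ fun s : ℝ => ((2 * Real.pi * s : ℝ) : ℂ) :=
    Complex.ofRealCLM.contDiff.comp (contDiff_const.mul contDiff_id)
  exact (h.mul contDiff_const).cexp

/-- The linear functional `x ↦ ∑ j, n j * x j` on `ℝ^k` given by an integer frequency vector. -/
noncomputable def freq {k : ℕ} (n : Fin k → ℤ) : (Fin k → ℝ) →L[ℝ] ℝ :=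
  ∑ j, (n j : ℝ) • ContinuousLinearMap.proj j

theorem freq_apply {k : ℕ} (n : Fin k → ℤ) (x : Fin k → ℝ) : freq n x = ∑ j, (n j : ℝ) * x j := by
  simp [freq]

theorem norm_freq_le {k : ℕ} (n : Fin k → ℤ) : ‖freq n‖ ≤ k * ‖n‖ := by
  refine ContinuousLinearMap.opNorm_le_bound _ (by positivity) fun x => ?_
  rw [freq_apply]
  refine (norm_sum_le _ _).trans ?_
  calc ∑ j, ‖(n j : ℝ) * x j‖ ≤ ∑ _j : Fin k, ‖n‖ * ‖x‖ := by
        refine Finset.sum_le_sum fun j _ => ?_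
        rw [norm_mul]
        gcongr
        · simpa [Int.norm_eq_abs] using norm_le_pi_norm n j
        · exact norm_le_pi_norm x j
    _ = _ := by simp; ring

theorem mFourier_coe {k : ℕ} (n : Fin k → ℤ) (x : Fin k → ℝ) :
    UnitAddTorus.mFourier n (fun j => (x j : UnitAddCircle)) = Real.fourierChar (freq n x) := by
  simp only [UnitAddTorus.mFourier, ContinuousMap.coe_mk, fourier_coe_apply, freq_apply,
    Real.fourierChar_apply, ← Complex.exp_sum]
  congr 1
  push_cast
  rw [Finset.mul_sum, Finset.sum_mul]
  exact Finset.sum_congr rfl fun j _ => by ring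

theorem summable_norm_int_vec (k : ℕ) : ∃ N : ℕ, Summable fun n : Fin k → ℤ => ‖n‖⁻¹ ^ N := by
  let L : Submodule ℤ (Fin k → ℝ) := Submodule.span ℤ (Set.range (Pi.basisFun ℝ (Fin k)))
  refine ⟨Module.finrank ℤ L + 1, ?_⟩
  have hmem : ∀ n : Fin k → ℤ, (fun j => (n j : ℝ)) ∈ L := fun n => by
    rw [(Pi.basisFun ℝ (Fin k)).mem_span_iff_repr_mem ℤ]
    intro j
    exact ⟨n j, by simp⟩
  have hinj : Function.Injective fun n : Fin k → ℤ => (⟨_, hmem n⟩ : L) := fun n m h => by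
    funext j
    have := congrFun (congrArg Subtype.val h) j
    simpa using this
  refine (ZLattice.summable_norm_pow_inv L _ (Nat.lt_succ_self _)).comp_injective hinj |>.congr fun n => ?_
  have : ‖n‖ = ‖(fun j => (n j : ℝ))‖ := by
    simp only [Pi.norm_def, NNReal.coe_inj]
    congr 1
  rw [this]
  rfl

/-- Multiplication of a fixed Schwartz function `X` by the character of frequency `n` increases its
seminorms at most polynomially in `n`. -/
theorem seminorm_mul_char_le {k : ℕ} (X : SchwartzMap (Fin k → ℝ) ℂ) (a b : ℕ) :
    ∃ C : ℝ, 0 ≤ C ∧ ∀ (n : Fin k → ℤ) (Φ : SchwartzMap (Fin k → ℝ) ℂ),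
      (∀ x, Φ x = Real.fourierChar (freq n x) * X x) →
      SchwartzMap.seminorm ℂ a b Φ ≤ C * (1 + ‖n‖) ^ b := by
  let C : ℝ := ∑ j ∈ Finset.range (b + 1), (b.choose j : ℝ) * (2 * Real.pi * k) ^ j *
    SchwartzMap.seminorm ℂ a (b - j) X
  have hC : 0 ≤ C := by positivity
  refine ⟨C, hC, fun n Φ hΦ => SchwartzMap.seminorm_le_bound ℂ a b _ (by positivity) fun x => ?_⟩
  have hfun : (Φ : (Fin k → ℝ) → ℂ) =
      fun y => ((fun s : ℝ => (Real.fourierChar s : ℂ)) ∘ freq n) y * X y := funext hΦ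
  rw [hfun]
  refine (schwartz_mul_bound (B := fun j => (2 * Real.pi * k) ^ j * ‖n‖ ^ j)
    (contDiff_fourierChar'.comp (freq n).contDiff) (fun j y => ?_) X a b x).trans ?_
  · refine (norm_iteratedFDeriv_comp_clm_le contDiff_fourierChar' (freq n) j y).trans ?_
    rw [norm_iteratedFDeriv_fourierChar, ← mul_pow, ← mul_pow, mul_assoc (2 * Real.pi)]
    gcongr
    exact norm_freq_le n
  · simp only [C, Finset.sum_mul]
    refine Finset.sum_le_sum fun j hj => ?_
    have hjb : ‖n‖ ^ j ≤ (1 + ‖n‖) ^ b :=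
      (pow_le_pow_left₀ (norm_nonneg _) (by linarith) j).trans
        (pow_le_pow_right₀ (by linarith [norm_nonneg n])
          (Nat.lt_succ_iff.1 (Finset.mem_range.1 hj)))
    calc _ = (b.choose j : ℝ) * (2 * Real.pi * k) ^ j * SchwartzMap.seminorm ℂ a (b - j) X *
          ‖n‖ ^ j := by ring
      _ ≤ _ := by gcongr

/-- Rapid decay of Fourier integrals at integer frequencies. The Fourier transform of Schwartz
functions needs an inner product space, so the integral is moved to `EuclideanSpace ℝ (Fin k)`. -/
theorem fourier_integral_decay {k : ℕ} (f : SchwartzMap (Fin k → ℝ) ℂ) (N : ℕ) :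
    ∃ C : ℝ, 0 ≤ C ∧ ∀ n : Fin k → ℤ,
      ‖n‖ ^ N * ‖∫ x, (Real.fourierChar (freq (-n) x) : ℂ) * f x‖ ≤ C := by
  let e : EuclideanSpace ℝ (Fin k) ≃L[ℝ] (Fin k → ℝ) := EuclideanSpace.equiv (Fin k) ℝ
  let f' : SchwartzMap (EuclideanSpace ℝ (Fin k)) ℂ :=
    SchwartzMap.compCLMOfContinuousLinearEquiv ℂ e f
  refine ⟨SchwartzMap.seminorm ℂ N 0 (FourierTransform.fourier f'), apply_nonneg _ _, fun n => ?_⟩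
  let w : EuclideanSpace ℝ (Fin k) := WithLp.toLp 2 fun j => (n j : ℝ)
  have hw : ‖n‖ ≤ ‖w‖ := by
    refine (pi_norm_le_iff_of_nonneg (norm_nonneg _)).2 fun j => ?_
    simpa [w, Int.norm_eq_abs] using PiLp.norm_apply_le w j
  have hint : ∫ x, (Real.fourierChar (freq (-n) x) : ℂ) * f x =
      FourierTransform.fourier f' w := by
    rw [SchwartzMap.fourier_coe, Real.fourier_eq,
      ← (PiLp.volume_preserving_ofLp (Fin k)).integral_comp
        (MeasurableEquiv.toLp 2 (Fin k → ℝ)).symm.measurableEmbedding]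
    refine integral_congr_ae (Eventually.of_forall fun v => ?_)
    simp only [Circle.smul_def, smul_eq_mul]
    congr 3
    · rw [freq_apply]
      simp [w, PiLp.inner_apply]
  rw [hint]
  refine le_trans ?_ (SchwartzMap.norm_pow_mul_le_seminorm ℂ (FourierTransform.fourier f') N w)
  gcongr

/-! ### Functions on the torus -/

/-- The representative of a point of `ℝ/ℤ` in `(-1/2, 1/2]`. -/
noncomputable def circleRep (t : UnitAddCircle) : ℝ := AddCircle.equivIoc 1 (-1 / 2 : ℝ) t

theorem coe_circleRep (t : UnitAddCircle) : (circleRep t : UnitAddCircle) = t :=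
  (AddCircle.equivIoc 1 (-1 / 2 : ℝ)).symm_apply_apply t

theorem circleRep_mem (t : UnitAddCircle) : circleRep t ∈ Set.Ioc (-1 / 2 : ℝ) (1 / 2) := by
  have := (AddCircle.equivIoc 1 (-1 / 2 : ℝ) t).2
  norm_num at this ⊢
  exact this

theorem circleRep_coe {x : ℝ} (hx : x ∈ Set.Ioc (-1 / 2 : ℝ) (1 / 2)) :
    circleRep (x : UnitAddCircle) = x := by
  have hx' : x ∈ Set.Ioc (-1 / 2 : ℝ) (-1 / 2 + 1) := by norm_num at hx ⊢; exact hx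
  exact congrArg Subtype.val (AddCircle.equivIoc_coe_eq (p := (1 : ℝ)) hx')

theorem norm_eq_abs_circleRep (t : UnitAddCircle) : ‖t‖ = |circleRep t| := by
  have h := circleRep_mem t
  conv_lhs => rw [← coe_circleRep t]
  refine (AddCircle.norm_coe_eq_abs_iff (p := (1 : ℝ)) one_ne_zero).2 ?_
  rw [abs_one, abs_le]
  constructor <;> linarith [h.1, h.2]

theorem continuousAt_circleRep {t : UnitAddCircle} (ht : ‖t‖ < 1 / 2) :
    ContinuousAt circleRep t := by
  refine continuousAt_subtype_val.comp (AddCircle.continuousAt_equivIoc (1 : ℝ) (-1 / 2) ?_)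
  rintro rfl
  have h : ‖((-1 / 2 : ℝ) : UnitAddCircle)‖ = |(-1 / 2 : ℝ)| :=
    (AddCircle.norm_coe_eq_abs_iff (p := (1 : ℝ)) one_ne_zero).2 (by norm_num [abs_of_neg])
  rw [h] at ht
  norm_num [abs_of_neg] at ht

/-- A Schwartz function supported in `[-1/4, 1/4]^k`, seen as a function on the torus `(ℝ/ℤ)^k`:
evaluate it at the representative in `(-1/2, 1/2]^k`. The margin between `1/4` and `1/2` makes the
result continuous although the representative jumps at `1/2`. -/
noncomputable def toTorus {k : ℕ} (f : SchwartzMap (Fin k → ℝ) ℂ)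
    (hf : ∀ x, f x ≠ 0 → ∀ j, |x j| ≤ 1 / 4) : C(UnitAddTorus (Fin k), ℂ) where
  toFun t := f fun j => circleRep (t j)
  continuous_toFun := by
    rw [continuous_iff_continuousAt]
    intro t
    by_cases ht : ∀ j, ‖t j‖ < 1 / 2
    · refine f.continuous.continuousAt.comp (continuousAt_pi.2 fun j => ?_)
      exact ContinuousAt.comp (f := fun t : UnitAddTorus (Fin k) => t j)
        (continuousAt_circleRep (ht j)) (continuous_apply j).continuousAt
    · push Not at ht
      obtain ⟨j, hj⟩ := ht
      -- near such a point the `j`-th coordinate stays away from the support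
      have h0 : (fun t : UnitAddTorus (Fin k) => f fun j => circleRep (t j)) =ᶠ[𝓝 t]
          fun _ => 0 := by
        have hc : Continuous fun t : UnitAddTorus (Fin k) => ‖t j‖ := (continuous_apply j).norm
        filter_upwards [hc.continuousAt.eventually
          (lt_mem_nhds (show (1 / 4 : ℝ) < ‖t j‖ by linarith))] with s hs
        by_contra hne
        rw [norm_eq_abs_circleRep] at hs
        exact absurd (hf _ hne j) (not_le.2 hs)
      exact continuousAt_const.congr h0.symm

theorem toTorus_coe {k : ℕ} (f : SchwartzMap (Fin k → ℝ) ℂ)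
    (hf : ∀ x, f x ≠ 0 → ∀ j, |x j| ≤ 1 / 4) {x : Fin k → ℝ}
    (hx : ∀ j, x j ∈ Set.Ioc (-1 / 2 : ℝ) (1 / 2)) :
    toTorus f hf (fun j => (x j : UnitAddCircle)) = f x := by
  change f _ = f x
  congr 1
  funext j
  exact circleRep_coe (hx j)

/-- Since `f` is supported inside a fundamental domain, its Fourier coefficients on the torus are
the values at integers of its Fourier transform on `ℝ^k`. -/
theorem mFourierCoeff_toTorus {k : ℕ} (f : SchwartzMap (Fin k → ℝ) ℂ)
    (hf : ∀ x, f x ≠ 0 → ∀ j, |x j| ≤ 1 / 4) (n : Fin k → ℤ) :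
    UnitAddTorus.mFourierCoeff (toTorus f hf) n =
      ∫ x, (Real.fourierChar (freq (-n) x) : ℂ) * f x := by
  rw [UnitAddTorus.mFourierCoeff_eq_integral _ _ fun _ => (-1 / 2 : ℝ)]
  have hS : {x : Fin k → ℝ | ∀ j, x j ∈ Set.Ioc (-1 / 2 : ℝ) (-1 / 2 + 1)} =
      {x : Fin k → ℝ | ∀ j, x j ∈ Set.Ioc (-1 / 2 : ℝ) (1 / 2)} := by norm_num
  have hSm : MeasurableSet {x : Fin k → ℝ | ∀ j, x j ∈ Set.Ioc (-1 / 2 : ℝ) (1 / 2)} :=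
    MeasurableSet.univ_pi' fun _ => measurableSet_Ioc
  rw [hS, ← setIntegral_eq_integral_of_forall_compl_eq_zero
    (s := {x : Fin k → ℝ | ∀ j, x j ∈ Set.Ioc (-1 / 2 : ℝ) (1 / 2)})
    (f := fun x => (Real.fourierChar (freq (-n) x) : ℂ) * f x)]
  · refine setIntegral_congr_fun hSm fun x hx => ?_
    simp only [mFourier_coe, smul_eq_mul]
    rw [toTorus_coe f hf hx]
  · intro x hx
    by_contra hne
    refine hx fun j => ?_
    have := abs_le.1 (hf x (right_ne_zero_of_mul hne) j)
    constructor <;> linarith [this.1, this.2]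

/-! ### Density of pure tensors -/

/-- A one-dimensional cutoff equal to `1` on `[-1/4, 1/4]` and supported in `[-1/2, 1/2]`. -/
noncomputable def cutoff : ContDiffBump (0 : ℝ) := ⟨1 / 4, 1 / 2, by norm_num, by norm_num⟩

theorem cutoff_one {x : ℝ} (hx : |x| ≤ 1 / 4) : cutoff x = 1 :=
  cutoff.one_of_mem_closedBall (by simpa [cutoff] using hx)

theorem cutoff_zero {x : ℝ} (hx : 1 / 2 ≤ |x|) : cutoff x = 0 :=
  cutoff.zero_of_le_dist (by simpa [cutoff] using hx)

theorem cutoff_hasCompactSupport : HasCompactSupport fun x : ℝ => (cutoff x : ℂ) :=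
  cutoff.hasCompactSupport.comp_left (g := fun t : ℝ => (t : ℂ)) Complex.ofReal_zero

theorem cutoff_contDiff : ContDiff ℝ ∞ fun x : ℝ => (cutoff x : ℂ) :=
  Complex.ofRealCLM.contDiff.comp cutoff.contDiff

/-- The compactly supported Schwartz function `x ↦ χ(x) e^{2πinx}` on `ℝ`, where `χ` is
`cutoff`. -/
noncomputable def cutoffChar (n : ℤ) : SchwartzMap ℝ ℂ :=
  HasCompactSupport.toSchwartzMap (f := fun x => (cutoff x : ℂ) * Real.fourierChar (n * x))
    cutoff_hasCompactSupport.mul_right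
    (cutoff_contDiff.mul (contDiff_fourierChar'.comp (contDiff_const.mul contDiff_id)))

theorem cutoffChar_apply (n : ℤ) (x : ℝ) :
    cutoffChar n x = (cutoff x : ℂ) * Real.fourierChar (n * x) := rfl

theorem cutoffChar_hasCompactSupport (n : ℤ) : HasCompactSupport (cutoffChar n) :=
  cutoff_hasCompactSupport.mul_right (f' := fun x : ℝ => (Real.fourierChar (n * x) : ℂ))

theorem exists_tensor {k : ℕ} (f : Fin k → SchwartzMap ℝ ℂ)
    (hf : ∀ m, HasCompactSupport (f m)) :
    ∃ F : SchwartzMap (Fin k → ℝ) ℂ, HasCompactSupport F ∧ IsTensor f F := by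
  have hcs : HasCompactSupport fun x : Fin k → ℝ => ∏ m, f m (x m) := by
    refine HasCompactSupport.of_support_subset_isCompact
      (isCompact_univ_pi fun m => (hf m).isCompact) fun x hx => ?_
    intro m _
    exact subset_tsupport _ (Finset.prod_ne_zero_iff.1 hx m (Finset.mem_univ m))
  have hcd : ContDiff ℝ ∞ fun x : Fin k → ℝ => ∏ m, f m (x m) :=
    contDiff_prod fun m _ => ((f m).smooth ⊤).comp (contDiff_apply ℝ ℝ m)
  exact ⟨hcs.toSchwartzMap hcd, hcs, fun x => rfl⟩

/-- Density of tensors for functions supported in `[-1/4, 1/4]^k`: the Fourier series of `f`,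
multiplied by the product cutoff `Φ 0`, is a series of multiples of tensors which converges to `f`
in the Schwartz topology. -/
theorem vanish_of_support_cube {k : ℕ} (T : SchwartzMap (Fin k → ℝ) ℂ →L[ℂ] ℂ)
    (hT : ∀ f F, (∀ m, HasCompactSupport (f m)) → IsTensor f F → T F = 0)
    (f : SchwartzMap (Fin k → ℝ) ℂ) (hf : ∀ x, f x ≠ 0 → ∀ j, |x j| ≤ 1 / 4) : T f = 0 := by
  choose Φ _ hΦ using fun n : Fin k → ℤ =>
    exists_tensor (fun j => cutoffChar (n j)) fun j => cutoffChar_hasCompactSupport (n j)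
  have hΦX : ∀ n x, Φ n x = Real.fourierChar (freq n x) * Φ 0 x := fun n x => by
    rw [hΦ, hΦ, ← mFourier_coe]
    simp only [UnitAddTorus.mFourier, ContinuousMap.coe_mk, ← Finset.prod_mul_distrib]
    refine Finset.prod_congr rfl fun j _ => ?_
    simp only [cutoffChar_apply, fourier_coe_apply, Real.fourierChar_apply, Pi.zero_apply]
    simp only [Complex.ofReal_mul, Complex.ofReal_ofNat, Complex.ofReal_intCast, Int.cast_zero,
      zero_mul, mul_zero, Complex.ofReal_zero, Complex.exp_zero, mul_one, Complex.ofReal_one, div_one]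
    rw [mul_comm]
    congr 2
    ring
  let c : (Fin k → ℤ) → ℂ := UnitAddTorus.mFourierCoeff (toTorus f hf)
  obtain ⟨N, hN⟩ := summable_norm_int_vec k
  -- rapid decay of the coefficients beats the polynomial growth of the seminorms
  have hdec : ∀ b : ℕ, Summable fun n => ‖c n‖ * (1 + ‖n‖) ^ b := fun b => by
    obtain ⟨C, hC, hCn⟩ := fourier_integral_decay f (N + b)
    refine Summable.of_norm_bounded_eventually (hN.mul_left (C * 2 ^ b)) ?_
    filter_upwards [(Set.finite_singleton (0 : Fin k → ℤ)).compl_mem_cofinite] with n hn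
    have hn1 : 1 ≤ ‖n‖ := by
      obtain ⟨j, hj⟩ := Function.ne_iff.1 (show n ≠ 0 from hn)
      refine le_trans ?_ (norm_le_pi_norm n j)
      rw [Int.norm_eq_abs]
      exact_mod_cast Int.one_le_abs hj
    have hc : c n = ∫ x, (Real.fourierChar (freq (-n) x) : ℂ) * f x := mFourierCoeff_toTorus f hf n
    have hn0 : 0 < ‖n‖ := by linarith
    rw [Real.norm_of_nonneg (by positivity), inv_pow, ← div_eq_mul_inv, le_div_iff₀ (by positivity)]
    calc ‖c n‖ * (1 + ‖n‖) ^ b * ‖n‖ ^ N ≤ ‖c n‖ * (2 * ‖n‖) ^ b * ‖n‖ ^ N := by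
          gcongr; linarith
      _ = (‖n‖ ^ (N + b) * ‖c n‖) * 2 ^ b := by rw [mul_pow, pow_add]; ring
      _ ≤ C * 2 ^ b := by
          gcongr
          rw [hc]; exact hCn n
  have hcs : Summable c := .of_norm (by simpa using hdec 0)
  have hsum : HasSum (fun n => c n • Φ n) f := by
    refine schwartz_hasSum _ _ (fun x => ?_) fun a b => ?_
    · have h := (UnitAddTorus.hasSum_mFourier_series_apply_of_summable hcs
        (fun j => (x j : UnitAddCircle))).mul_right (Φ 0 x)
      have hfx : toTorus f hf (fun j => (x j : UnitAddCircle)) * Φ 0 x = f x := by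
        have hX : Φ 0 x = ∏ j, (cutoff (x j) : ℂ) := by
          rw [hΦ]
          exact Finset.prod_congr rfl fun j _ => by simp [cutoffChar_apply]
        by_cases hx : ∀ j, |x j| < 1 / 2
        · rw [toTorus_coe f hf fun j => ?_]
          · by_cases h0 : f x = 0
            · simp [h0]
            · rw [hX, Finset.prod_eq_one, mul_one]
              intro j _
              simp [cutoff_one (hf x h0 j)]
          · have := abs_lt.1 (hx j)
            constructor <;> linarith [this.1, this.2]
        · push Not at hx
          obtain ⟨j, hj⟩ := hx
          have h0 : f x = 0 := by
            by_contra hne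
            linarith [hf x hne j]
          rw [hX, Finset.prod_eq_zero (Finset.mem_univ j) (by simp [cutoff_zero hj]), h0, mul_zero]
      rw [hfx] at h
      refine h.congr_fun fun n => ?_
      change c n * Φ n x = c n * _ * _
      rw [hΦX, mFourier_coe, mul_assoc]
    · obtain ⟨C, hC, hCn⟩ := seminorm_mul_char_le (Φ 0) a b
      refine Summable.of_nonneg_of_le (fun _ => apply_nonneg _ _) (fun n => ?_)
        ((hdec b).mul_left C)
      rw [map_smul_eq_mul]
      calc _ ≤ ‖c n‖ * (C * (1 + ‖n‖) ^ b) := by gcongr; exact hCn n (Φ n) (hΦX n)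
        _ = _ := by ring
  have := hsum.mapL T
  simp only [map_smul, hT _ _ (fun j => cutoffChar_hasCompactSupport _) (hΦ _), smul_zero] at this
  exact this.unique hasSum_zero

/-- Density of the span of compactly supported pure tensors in `𝓢(ℝ^k)`, in dual form. After
truncation, a dilation (which preserves tensors) reduces to supports in `[-1/4, 1/4]^k`. -/
theorem vanish_of_vanish_on_tensors {k : ℕ} (T : SchwartzMap (Fin k → ℝ) ℂ →L[ℂ] ℂ)
    (hT : ∀ f F, (∀ m, HasCompactSupport (f m)) → IsTensor f F → T F = 0)
    (f : SchwartzMap (Fin k → ℝ) ℂ) : T f = 0 := by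
  refine schwartz_compact_dense T (fun f hf => ?_) f
  obtain ⟨R, hR0, hR⟩ := hf.isCompact.isBounded.exists_pos_norm_le
  have hr : (4 * R) ≠ 0 := by positivity
  let D : (Fin k → ℝ) ≃L[ℝ] (Fin k → ℝ) := ContinuousLinearEquiv.smulLeft (Units.mk0 (4 * R) hr)
  let D₁ : ℝ ≃L[ℝ] ℝ := ContinuousLinearEquiv.smulLeft (Units.mk0 (4 * R) hr)
  have hD : ∀ x, D x = (4 * R) • x := fun x => rfl
  let P := SchwartzMap.compCLMOfContinuousLinearEquiv ℂ (F := ℂ) D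
  let Q := SchwartzMap.compCLMOfContinuousLinearEquiv ℂ (F := ℂ) D.symm
  have hQP : Q (P f) = f := by ext x; simp [P, Q]
  rw [← hQP]
  refine vanish_of_support_cube (T.comp Q) (fun g G hg hG => ?_) (P f) fun x hx j => ?_
  · refine hT (fun m => SchwartzMap.compCLMOfContinuousLinearEquiv ℂ D₁.symm (g m)) _
      (fun m => (hg m).comp_homeomorph D₁.symm.toHomeomorph) fun x => ?_
    exact hG _
  · have h1 : ‖D x‖ ≤ R := hR _ (subset_tsupport _ hx)
    have h2 := (norm_le_pi_norm (D x) j).trans h1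
    rw [hD, Pi.smul_apply, norm_smul, Real.norm_of_nonneg (by positivity), Real.norm_eq_abs] at h2
    nlinarith

/-! ### Conjugation by a permutation -/

/-- The claim on pure tensors: `π⁻¹ · (f₁ ⊗ ⋯ ⊗ f_k) = f_{π(1)} ⊗ ⋯ ⊗ f_{π(k)}`, so both sides equal
`A(f_{π(ℓ(1))} ⊗ ⋯)(g_{π(ℓ(1))} ⊗ ⋯)` times the same product of integrals, reindexed by `π`.
Compact supports are assumed only to have the tensors on `ℝ^i` available as Schwartz functions. -/
theorem extension_conj_tensor (i k : ℕ) (A : DVO i) (ℓ : Fin i → Fin k) (π : Equiv.Perm (Fin k))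
    (E E' : DVO k) (hE : IsExtension i k A ℓ E) (hE' : IsExtension i k A (π ∘ ℓ) E')
    (f g : Fin k → SchwartzMap ℝ ℂ) (F G : SchwartzMap (Fin k → ℝ) ℂ)
    (hf : ∀ m, HasCompactSupport (f m)) (hg : ∀ m, HasCompactSupport (g m))
    (hF : IsTensor f F) (hG : IsTensor g G) :
    E (permCLM k π⁻¹ F) (permCLM k π⁻¹ G) = E' F G := by
  have hperm : ∀ (f : Fin k → SchwartzMap ℝ ℂ) (F : SchwartzMap (Fin k → ℝ) ℂ), IsTensor f F →
      IsTensor (fun m => f (π m)) (permCLM k π⁻¹ F) := fun f F hF x => by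
    have h : permCLM k π⁻¹ F x = F fun m => x (π⁻¹ m) := rfl
    rw [h, hF, ← Equiv.prod_comp π]
    simp
  obtain ⟨F', -, hF'⟩ := exists_tensor (fun a => f (π (ℓ a))) fun a => hf _
  obtain ⟨G', -, hG'⟩ := exists_tensor (fun a => g (π (ℓ a))) fun a => hg _
  rw [hE _ _ _ _ F' G' (hperm f F hF) (hperm g G hG) hF' hG', hE' f g F G F' G' hF hG hF' hG']
  congr 1
  refine Finset.prod_bij (fun m _ => π m) ?_ ?_ ?_ ?_
  · simp
  · simp
  · intro m hm
    refine ⟨π⁻¹ m, ?_, by simp⟩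
    simp only [Finset.mem_sdiff, Finset.mem_univ, true_and, Finset.mem_image, not_exists,
      Function.comp_apply] at hm ⊢
    intro a ha
    exact hm a (by simp [ha])
  · intros; rfl

/-- Conjugating the `k`-particle extension `A_{(ℓ)}` by a permutation `π ∈ S_k` yields the
extension `A_{(π∘ℓ)}` associated with the injection `π ∘ ℓ`:
`π ∘ A_{(ℓ)} ∘ π⁻¹ = A_{(π∘ℓ)}`.  Here `(π ∘ A_{(ℓ)} ∘ π⁻¹) f (g) = A_{(ℓ)} (π⁻¹·f) (π⁻¹·g)`,
with permutations acting on Schwartz functions by `(π·f)(x₁,…,x_k) = f(x_{π(1)},…,x_{π(k)})` and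
on tempered distributions by `(π·u)(g) = u(π⁻¹·g)`. -/
theorem perm_conj_extension (i k : ℕ) (hi : 0 < i) (hik : i ≤ k)
    (A : DVO i) (ℓ : Fin i → Fin k) (hℓ : Function.Injective ℓ) (π : Equiv.Perm (Fin k))
    (E E' : DVO k) (hE : IsExtension i k A ℓ E) (hE' : IsExtension i k A (π ∘ ℓ) E') :
    ∀ f g : SchwartzMap (Fin k → ℝ) ℂ,
      E (permCLM k π⁻¹ f) (permCLM k π⁻¹ g) = E' f g := by
  intro f g
  -- evaluation at a fixed Schwartz function is continuous for the strong dual topology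
  let ev : SchwartzMap (Fin k → ℝ) ℂ → (SchwartzMap (Fin k → ℝ) ℂ →L[ℂ] ℂ) →L[ℂ] ℂ := fun G =>
    { toFun := fun u => u G
      map_add' := fun _ _ => rfl
      map_smul' := fun _ _ => rfl
      cont := continuous_eval_const G }
  -- density is used first in `f`, then in `g`
  refine sub_eq_zero.1 (vanish_of_vanish_on_tensors
    ((ev (permCLM k π⁻¹ g)).comp (E.comp (permCLM k π⁻¹)) - (ev g).comp E')
    (fun f₁ F hf₁ hF => sub_eq_zero.2 ?_) f)
  refine sub_eq_zero.1 (vanish_of_vanish_on_tensors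
    ((E (permCLM k π⁻¹ F)).comp (permCLM k π⁻¹) - E' F) (fun g₁ G hg₁ hG => sub_eq_zero.2 ?_) g)
  exact extension_conj_tensor i k A ℓ π E E' hE hE' f₁ g₁ F G hf₁ hg₁ hF hG
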